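/- Let f : ℕ → ℤ be a completely multiplicative function taking values in {-1, 1}, and let c ∈ [-1, 0) be a real number. If the series ∑_p (c - f(p))/p over primes p converges, then the partial sums of μ·f are unbounded: lim sup_{N→∞} |∑_{n=1}^{N} μ(n) f(n)| = ∞, where μ is the Möbius function. -/

import Mathlib

/-!
Put `g = μ f`, and let `s > 1`. If the partial sums of `g` are bounded by `C`, then so is
`∑ g(n) n⁻ˢ` by partial summation, uniformly in `s`. On the other hand this series equals
`∏ (1 + g(p) p⁻ˢ)`, of modulus at least `exp (∑ Re g(p) p⁻ˢ - O(1))`. Letting `s → 1` bounds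
`∑ Re g(p) / p` from above, whereas `∑ (c - f(p)) / p` converges and `c < 0`, so that
`∑ f(p) / p` diverges to `-∞` together with `c ∑ 1 / p`.

To take the limit `s → 1`, the prime sum is cut at an index `M` at which the partial sums of
`∑ Re g(p) / p` are large and minimal among all later ones: partial summation shows that the tail
beyond such an `M` stays nonnegative for every `s ≥ 1`, so only a finite sum depends on `s`.
-/

open Filter Finset Topology

section PartialSummation

lemma norm_sum_range_smul_le_of_antitone {E : Type*} [NormedAddCommGroup E] [NormedSpace ℝ E]
    {w : ℕ → ℝ} {a : ℕ → E} {B : ℝ} (hw : Antitone w) (hw₀ : ∀ n, 0 ≤ w n)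
    (ha : ∀ n, ‖∑ i ∈ range n, a i‖ ≤ B) (n : ℕ) :
    ‖∑ i ∈ range n, w i • a i‖ ≤ w 0 * B := by
  have hstep (i : ℕ) : ‖(w (i + 1) - w i) • ∑ j ∈ range (i + 1), a j‖ ≤ (w i - w (i + 1)) * B := by
    have hwi := hw i.le_succ
    rw [norm_smul, Real.norm_of_nonpos (sub_nonpos.2 hwi), neg_sub]
    exact mul_le_mul_of_nonneg_left (ha _) (sub_nonneg.2 hwi)
  have hlast : ‖w (n - 1) • ∑ i ∈ range n, a i‖ ≤ w (n - 1) * B := by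
    rw [norm_smul, Real.norm_of_nonneg (hw₀ _)]
    exact mul_le_mul_of_nonneg_left (ha n) (hw₀ _)
  rw [sum_range_by_parts]
  calc _ ≤ w (n - 1) * B + ∑ i ∈ range (n - 1), (w i - w (i + 1)) * B :=
        (norm_sub_le _ _).trans (add_le_add hlast (norm_sum_le_of_le _ fun i _ ↦ hstep i))
    _ = w 0 * B := by rw [← sum_mul, sum_range_sub']; ring

lemma sum_range_mul_nonneg_of_antitone {w a : ℕ → ℝ} (hw : Antitone w) (hw₀ : ∀ n, 0 ≤ w n)
    (ha : ∀ n, 0 ≤ ∑ i ∈ range n, a i) (n : ℕ) : 0 ≤ ∑ i ∈ range n, w i * a i := by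
  simp only [← smul_eq_mul]
  rw [sum_range_by_parts, sub_nonneg]
  exact (sum_nonpos fun i _ ↦ mul_nonpos_of_nonpos_of_nonneg
    (sub_nonpos.2 (hw i.le_succ)) (ha _)).trans (mul_nonneg (hw₀ _) (ha n))

lemma sum_range_mul_le_sum_range_mul_of_antitoneOn {w a : ℕ → ℝ} {M N : ℕ}
    (hw : AntitoneOn w (Set.Ici M)) (hw₀ : ∀ n, M ≤ n → 0 ≤ w n)
    (ha : ∀ n, M ≤ n → ∑ i ∈ range M, a i ≤ ∑ i ∈ range n, a i) (hMN : M ≤ N) :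
    ∑ i ∈ range M, w i * a i ≤ ∑ i ∈ range N, w i * a i := by
  obtain ⟨k, rfl⟩ := Nat.exists_eq_add_of_le hMN
  rw [sum_range_add, le_add_iff_nonneg_right]
  refine sum_range_mul_nonneg_of_antitone (w := fun i ↦ w (M + i)) (a := fun i ↦ a (M + i))
    (fun i j hij ↦ hw (Nat.le_add_right M i) (Nat.le_add_right M j) (Nat.add_le_add_left hij M))
    (fun i ↦ hw₀ _ (Nat.le_add_right M i)) (fun n ↦ ?_) k
  have := ha (M + n) (Nat.le_add_right M n)
  rwa [sum_range_add, le_add_iff_nonneg_right] at this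

end PartialSummation

lemma exists_forall_ge_le_of_tendsto_atTop {β : Type*} [LinearOrder β] {u : ℕ → β}
    (hu : Tendsto u atTop atTop) (b : β) (n₀ : ℕ) :
    ∃ m ≥ n₀, b ≤ u m ∧ ∀ n ≥ m, u m ≤ u n := by
  obtain ⟨n₁, hn₁⟩ := eventually_atTop.1 (hu.eventually_ge_atTop b)
  have hshift : Tendsto (fun k ↦ u (k + max n₀ n₁)) cofinite atTop :=
    Nat.cofinite_eq_atTop ▸ (tendsto_add_atTop_iff_nat _).2 hu
  obtain ⟨k, hk⟩ := hshift.exists_forall_le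
  refine ⟨k + max n₀ n₁, by lia, hn₁ _ (by lia), fun n hn ↦ ?_⟩
  simpa [Nat.sub_add_cancel (show max n₀ n₁ ≤ n by lia)] using hk (n - max n₀ n₁)

section ProductLowerBound

lemma exp_sub_two_mul_sq_le_one_add {x : ℝ} (hx : -(1 / 2) ≤ x) :
    Real.exp (x - 2 * x ^ 2) ≤ 1 + x := by
  have hpos : 0 < 1 + x := by linarith
  rw [← Real.le_log_iff_exp_le hpos]
  refine le_trans ?_ (Real.one_sub_inv_le_log_of_pos hpos)
  rw [← sub_nonneg]
  have : 1 - (1 + x)⁻¹ - (x - 2 * x ^ 2) = x ^ 2 * (1 + 2 * x) / (1 + x) := by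
    field_simp
    ring
  rw [this]
  exact div_nonneg (mul_nonneg (sq_nonneg x) (by linarith)) hpos.le

variable {𝕜 : Type*} [RCLike 𝕜]

lemma exp_re_sub_two_mul_norm_sq_le_norm_one_add {z : 𝕜} (hz : ‖z‖ ≤ 1 / 2) :
    Real.exp (RCLike.re z - 2 * ‖z‖ ^ 2) ≤ ‖1 + z‖ := by
  have hre := RCLike.abs_re_le_norm z
  calc Real.exp (RCLike.re z - 2 * ‖z‖ ^ 2)
      ≤ Real.exp (RCLike.re z - 2 * RCLike.re z ^ 2) := by
        have := sq_le_sq.2 (hre.trans (le_abs_self _))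
        gcongr
    _ ≤ 1 + RCLike.re z := exp_sub_two_mul_sq_le_one_add (by linarith [(abs_le.1 hre).1])
    _ = RCLike.re (1 + z) := by simp
    _ ≤ ‖1 + z‖ := RCLike.re_le_norm _

lemma exp_sum_re_sub_le_norm_prod_one_add {ι : Type*} {t : Finset ι} {z : ι → 𝕜}
    (hz : ∀ i ∈ t, ‖z i‖ ≤ 1 / 2) :
    Real.exp (∑ i ∈ t, RCLike.re (z i) - 2 * ∑ i ∈ t, ‖z i‖ ^ 2) ≤ ‖∏ i ∈ t, (1 + z i)‖ := by
  rw [mul_sum, ← sum_sub_distrib, Real.exp_sum, norm_prod]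
  exact prod_le_prod (fun _ _ ↦ (Real.exp_pos _).le)
    fun i hi ↦ exp_re_sub_two_mul_norm_sq_le_norm_one_add (hz i hi)

end ProductLowerBound

section SquarefreeSupport

open ArithmeticFunction

lemma tendsto_prod_primesBelow_one_add {R : Type*} [NormedCommRing R] [CompleteSpace R]
    {h : ArithmeticFunction R} (hmul : h.IsMultiplicative) (hsupp : ∀ n, ¬ Squarefree n → h n = 0)
    (hsum : Summable (‖h ·‖)) :
    Tendsto (fun N : ℕ ↦ ∏ p ∈ N.primesBelow, (1 + h p)) atTop (𝓝 (∑' n, h n)) := by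
  refine (hmul.eulerProduct hsum).congr fun N ↦ prod_congr rfl fun p hp ↦ ?_
  have hprime := Nat.prime_of_mem_primesBelow hp
  rw [tsum_eq_sum (s := range 2)]
  · simp [sum_range_succ, hmul.map_one]
  · intro e he
    rw [mem_range, not_lt] at he
    refine hsupp _ fun hsq ↦ ?_
    have := ((Nat.squarefree_pow_iff hprime.ne_one (by lia)).1 hsq).2
    lia

variable {𝕜 : Type*} [RCLike 𝕜]

lemma norm_le_one_of_norm_prime_le_one {g : ArithmeticFunction 𝕜} (hmul : g.IsMultiplicative)
    (hsupp : ∀ n, ¬ Squarefree n → g n = 0) (hprime : ∀ p, p.Prime → ‖g p‖ ≤ 1) (n : ℕ) :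
    ‖g n‖ ≤ 1 := by
  by_cases hn : Squarefree n
  · rw [← hmul.prod_primeFactors hn, norm_prod]
    exact prod_le_one (fun _ _ ↦ norm_nonneg _)
      fun p hp ↦ hprime p (Nat.prime_of_mem_primeFactors hp)
  · simp [hsupp n hn]

/-- The terms `g(n) n⁻ˢ` of the Dirichlet series of `g` at a real point `s`. -/
noncomputable def dirichletTerm (s : ℝ) (g : ArithmeticFunction 𝕜) : ArithmeticFunction 𝕜 :=
  ⟨fun n ↦ ((n : ℝ) ^ (-s)) • g n, by simp⟩

lemma dirichletTerm_apply (s : ℝ) (g : ArithmeticFunction 𝕜) (n : ℕ) :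
    dirichletTerm s g n = ((n : ℝ) ^ (-s)) • g n := rfl

lemma isMultiplicative_dirichletTerm {g : ArithmeticFunction 𝕜} (hmul : g.IsMultiplicative)
    (s : ℝ) : (dirichletTerm s g).IsMultiplicative := by
  refine ⟨by simp [dirichletTerm_apply, hmul.map_one], fun {m n} hmn ↦ ?_⟩
  simp only [dirichletTerm_apply]
  rw [hmul.map_mul_of_coprime hmn, Nat.cast_mul, Real.mul_rpow m.cast_nonneg n.cast_nonneg,
    smul_mul_smul_comm]

lemma norm_dirichletTerm_le {g : ArithmeticFunction 𝕜} {n : ℕ} (hn : ‖g n‖ ≤ 1) (s : ℝ) :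
    ‖dirichletTerm s g n‖ ≤ (n : ℝ) ^ (-s) := by
  have hpow : 0 ≤ (n : ℝ) ^ (-s) := by positivity
  rw [dirichletTerm_apply, norm_smul, Real.norm_of_nonneg hpow]
  exact mul_le_of_le_one_right hpow hn

lemma summable_norm_dirichletTerm {g : ArithmeticFunction 𝕜} (hg : ∀ n, ‖g n‖ ≤ 1) {s : ℝ}
    (hs : 1 < s) : Summable (‖dirichletTerm s g ·‖) :=
  (Real.summable_nat_rpow.2 (neg_lt_neg hs)).of_nonneg_of_le (fun _ ↦ norm_nonneg _)
    fun n ↦ norm_dirichletTerm_le (hg n) s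

lemma norm_tsum_dirichletTerm_le {g : ArithmeticFunction 𝕜} {C s : ℝ} (hs : 0 ≤ s)
    (hsum : Summable (dirichletTerm s g ·)) (hC : ∀ N, ‖∑ n ∈ Icc 1 N, g n‖ ≤ C) :
    ‖∑' n, dirichletTerm s g n‖ ≤ C := by
  have hanti : Antitone fun n : ℕ ↦ ((n + 1 : ℕ) : ℝ) ^ (-s) := fun m n hmn ↦
    Real.rpow_le_rpow_of_nonpos (by positivity) (by gcongr) (neg_nonpos.2 hs)
  have hpartial (N : ℕ) : ‖∑ n ∈ range N, g (n + 1)‖ ≤ C := by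
    rw [range_eq_Ico, sum_Ico_add', zero_add, Ico_add_one_right_eq_Icc]
    exact hC N
  rw [hsum.tsum_eq_zero_add, ArithmeticFunction.map_zero, zero_add]
  refine le_of_tendsto ((summable_nat_add_iff 1).2 hsum).hasSum.tendsto_sum_nat.norm
    (Eventually.of_forall fun N ↦ ?_)
  simpa [dirichletTerm_apply] using
    norm_sum_range_smul_le_of_antitone hanti (fun _ ↦ by positivity) hpartial N

lemma exp_sum_primesBelow_sub_le_norm_prod {g : ArithmeticFunction 𝕜}
    (hprime : ∀ p, p.Prime → ‖g p‖ ≤ 1) {s : ℝ} (hs : 1 ≤ s) (N : ℕ) :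
    Real.exp (∑ p ∈ N.primesBelow, RCLike.re (dirichletTerm s g p) -
        2 * ∑' n : ℕ, ((n : ℝ) ^ 2)⁻¹) ≤
      ‖∏ p ∈ N.primesBelow, (1 + dirichletTerm s g p)‖ := by
  have hnorm (p : ℕ) (hp : p ∈ N.primesBelow) : ‖dirichletTerm s g p‖ ≤ (p : ℝ)⁻¹ := by
    have hpp := Nat.prime_of_mem_primesBelow hp
    refine (norm_dirichletTerm_le (hprime p hpp) s).trans ?_
    rw [← Real.rpow_neg_one]
    exact Real.rpow_le_rpow_of_exponent_le (mod_cast hpp.one_le) (neg_le_neg hs)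
  have hhalf (p : ℕ) (hp : p ∈ N.primesBelow) : ‖dirichletTerm s g p‖ ≤ 1 / 2 := by
    refine (hnorm p hp).trans ?_
    rw [one_div]
    exact inv_anti₀ two_pos (mod_cast (Nat.prime_of_mem_primesBelow hp).two_le)
  have hsq : ∑ p ∈ N.primesBelow, ‖dirichletTerm s g p‖ ^ 2 ≤ ∑' n : ℕ, ((n : ℝ) ^ 2)⁻¹ :=
    calc _ ≤ ∑ p ∈ N.primesBelow, ((p : ℝ) ^ 2)⁻¹ := sum_le_sum fun p hp ↦ by
          rw [← inv_pow]
          exact pow_le_pow_left₀ (norm_nonneg _) (hnorm p hp) 2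
      _ ≤ _ := (Real.summable_nat_pow_inv.2 one_lt_two).sum_le_tsum _ fun _ _ ↦ by positivity
  refine le_trans ?_ (exp_sum_re_sub_le_norm_prod_one_add hhalf)
  gcongr

lemma sum_primesBelow_dirichletTerm_mono_of_one {g : ArithmeticFunction 𝕜} {s : ℝ} (hs : 1 ≤ s)
    {M N : ℕ} (hM₀ : 1 ≤ M) (hM : ∀ n ≥ M, ∑ p ∈ M.primesBelow, RCLike.re (dirichletTerm 1 g p) ≤
      ∑ p ∈ n.primesBelow, RCLike.re (dirichletTerm 1 g p)) (hMN : M ≤ N) :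
    ∑ p ∈ M.primesBelow, RCLike.re (dirichletTerm s g p) ≤
      ∑ p ∈ N.primesBelow, RCLike.re (dirichletTerm s g p) := by
  have hanti : AntitoneOn (fun n : ℕ ↦ (n : ℝ) ^ (1 - s)) (Set.Ici M) := fun m hm n _ hmn ↦
    Real.rpow_le_rpow_of_nonpos (mod_cast hM₀.trans hm) (mod_cast hmn) (sub_nonpos.2 hs)
  have hfactor (n : ℕ) : ∑ p ∈ n.primesBelow, RCLike.re (dirichletTerm s g p) =
      ∑ p ∈ range n, (p : ℝ) ^ (1 - s) *
        if p.Prime then RCLike.re (dirichletTerm 1 g p) else 0 := by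
    rw [Nat.primesBelow, sum_filter]
    refine sum_congr rfl fun p _ ↦ ?_
    split_ifs with hp
    · rw [dirichletTerm_apply, dirichletTerm_apply, RCLike.smul_re, RCLike.smul_re, ← mul_assoc,
        ← Real.rpow_add (mod_cast hp.pos)]
      ring_nf
    · rw [mul_zero]
  rw [hfactor, hfactor]
  refine sum_range_mul_le_sum_range_mul_of_antitoneOn hanti (fun _ _ ↦ by positivity) ?_ hMN
  simpa only [Nat.primesBelow, sum_filter] using hM

lemma exp_sum_primesBelow_sub_le_of_norm_sum_le {g : ArithmeticFunction 𝕜}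
    (hmul : g.IsMultiplicative) (hsupp : ∀ n, ¬ Squarefree n → g n = 0)
    (hprime : ∀ p, p.Prime → ‖g p‖ ≤ 1) {C : ℝ} (hC : ∀ N, ‖∑ n ∈ Icc 1 N, g n‖ ≤ C)
    {M : ℕ} (hM₀ : 1 ≤ M) (hM : ∀ n ≥ M, ∑ p ∈ M.primesBelow, RCLike.re (dirichletTerm 1 g p) ≤
      ∑ p ∈ n.primesBelow, RCLike.re (dirichletTerm 1 g p)) :
    Real.exp (∑ p ∈ M.primesBelow, RCLike.re (dirichletTerm 1 g p) -
      2 * ∑' n : ℕ, ((n : ℝ) ^ 2)⁻¹) ≤ C := by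
  have hbound (s : ℝ) (hs : 1 < s) :
      Real.exp (∑ p ∈ M.primesBelow, RCLike.re (dirichletTerm s g p) -
        2 * ∑' n : ℕ, ((n : ℝ) ^ 2)⁻¹) ≤ C := by
    have hsum := summable_norm_dirichletTerm (norm_le_one_of_norm_prime_le_one hmul hsupp hprime) hs
    have heuler := tendsto_prod_primesBelow_one_add (isMultiplicative_dirichletTerm hmul s)
      (fun n hn ↦ by rw [dirichletTerm_apply, hsupp n hn, smul_zero]) hsum
    refine le_trans ?_ (norm_tsum_dirichletTerm_le (zero_le_one.trans hs.le) hsum.of_norm hC)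
    refine ge_of_tendsto heuler.norm (eventually_atTop.2 ⟨M, fun N hN ↦ ?_⟩)
    refine le_trans ?_ (exp_sum_primesBelow_sub_le_norm_prod hprime hs.le N)
    have := sum_primesBelow_dirichletTerm_mono_of_one hs.le hM₀ hM hN
    gcongr
  have hcont : ContinuousAt (fun s : ℝ ↦
      Real.exp (∑ p ∈ M.primesBelow, RCLike.re (dirichletTerm s g p) -
        2 * ∑' n : ℕ, ((n : ℝ) ^ 2)⁻¹)) 1 := by
    refine (ContinuousAt.sub (tendsto_finsetSum _ fun p hp ↦ ?_) continuousAt_const).rexp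
    simp only [dirichletTerm_apply, RCLike.smul_re]
    have hp₀ : (p : ℝ) ≠ 0 := mod_cast (Nat.prime_of_mem_primesBelow hp).ne_zero
    exact (continuousAt_const.rpow continuousAt_neg (Or.inl hp₀)).mul_const _
  exact le_of_tendsto (hcont.tendsto.mono_left (nhdsWithin_le_nhds (s := Set.Ioi 1)))
    (eventually_nhdsWithin_of_forall hbound)

lemma exists_lt_norm_sum_of_tendsto_sum_primesBelow {g : ArithmeticFunction 𝕜}
    (hmul : g.IsMultiplicative) (hsupp : ∀ n, ¬ Squarefree n → g n = 0)
    (hprime : ∀ p, p.Prime → ‖g p‖ ≤ 1)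
    (hdiv : Tendsto (fun N : ℕ ↦ ∑ p ∈ N.primesBelow, RCLike.re (g p) / p) atTop atTop) (C : ℝ) :
    ∃ N, C < ‖∑ n ∈ Icc 1 N, g n‖ := by
  by_contra! hC
  have hterm (p : ℕ) : RCLike.re (g p) / p = RCLike.re (dirichletTerm 1 g p) := by
    rw [dirichletTerm_apply, RCLike.smul_re, Real.rpow_neg_one, div_eq_inv_mul]
  simp only [hterm] at hdiv
  obtain ⟨M, hM₀, hlarge, hmin⟩ :=
    exists_forall_ge_le_of_tendsto_atTop hdiv (C + 2 * ∑' n : ℕ, ((n : ℝ) ^ 2)⁻¹) 1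
  have hexp := exp_sum_primesBelow_sub_le_of_norm_sum_le hmul hsupp hprime hC hM₀ hmin
  have := (Real.add_one_le_exp _).trans hexp
  linarith

end SquarefreeSupport

lemma tendsto_sum_primesBelow_one_div_atTop :
    Tendsto (fun N : ℕ ↦ ∑ p ∈ N.primesBelow, (1 : ℝ) / p) atTop atTop := by
  have hnonneg (n : ℕ) : 0 ≤ Set.indicator {p | p.Prime} (fun n : ℕ ↦ (1 : ℝ) / n) n :=
    Set.indicator_nonneg (fun _ _ ↦ by positivity) n
  simpa [Nat.primesBelow, sum_filter, Set.indicator_apply] using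
    (not_summable_iff_tendsto_nat_atTop_of_nonneg hnonneg).1 not_summable_one_div_on_primes

lemma tendsto_sum_primesBelow_div_atBot {u : ℕ → ℝ} {c L : ℝ} (hc : c < 0)
    (hu : Tendsto (fun N : ℕ ↦ ∑ p ∈ N.primesBelow, (c - u p) / p) atTop (𝓝 L)) :
    Tendsto (fun N : ℕ ↦ ∑ p ∈ N.primesBelow, u p / p) atTop atBot := by
  refine ((tendsto_sum_primesBelow_one_div_atTop.const_mul_atTop_of_neg hc).atBot_add
    hu.neg).congr fun N ↦ ?_
  rw [mul_sum, ← sum_neg_distrib, ← sum_add_distrib]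
  exact sum_congr rfl fun p _ ↦ by ring

theorem stmt_5_general {𝕜 : Type*} [RCLike 𝕜] {f : ℕ → 𝕜} (hf1 : f 1 = 1)
    (hfmul : ∀ m n : ℕ, m.Coprime n → f (m * n) = f m * f n)
    (hfprime : ∀ p : ℕ, p.Prime → ‖f p‖ ≤ 1)
    (hdiv : Tendsto (fun N : ℕ ↦ ∑ p ∈ N.primesBelow, RCLike.re (f p) / p) atTop atBot) (C : ℝ) :
    ∃ N : ℕ, C < ‖∑ n ∈ Icc 1 N, (ArithmeticFunction.moebius n : 𝕜) * f n‖ := by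
  let g : ArithmeticFunction 𝕜 := ⟨fun n ↦ (ArithmeticFunction.moebius n : 𝕜) * f n, by simp⟩
  have hg (n : ℕ) : g n = (ArithmeticFunction.moebius n : 𝕜) * f n := rfl
  have hgprime (p : ℕ) (hp : p.Prime) : g p = -f p := by
    simp [hg, ArithmeticFunction.moebius_apply_prime hp]
  refine exists_lt_norm_sum_of_tendsto_sum_primesBelow (g := g) ⟨by simp [hg, hf1], ?_⟩ ?_ ?_ ?_ C
  · intro m n hmn
    rw [hg, hfmul m n hmn,
      ArithmeticFunction.isMultiplicative_moebius.map_mul_of_coprime hmn, Int.cast_mul,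
      mul_mul_mul_comm, ← hg, ← hg]
  · intro n hn
    simp [hg, ArithmeticFunction.moebius_eq_zero_of_not_squarefree hn]
  · intro p hp
    rw [hgprime p hp, norm_neg]
    exact hfprime p hp
  · refine (tendsto_neg_atBot_atTop.comp hdiv).congr fun N ↦ ?_
    rw [Function.comp_apply, ← sum_neg_distrib]
    refine sum_congr rfl fun p hp ↦ ?_
    rw [hgprime p (Nat.prime_of_mem_primesBelow hp), _root_.map_neg, neg_div]

/-- If `f` is completely multiplicative with values in `{-1, 1}`, `c ∈ [-1, 0)`, and
`∑_p (c - f p)/p` converges, then the partial sums of `μ·f` are unbounded. -/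
theorem stmt_5 (f : ℕ → ℤ)
    (hf1 : f 1 = 1)
    (hfmul : ∀ a b : ℕ, f (a * b) = f a * f b)
    (hfpm : ∀ n : ℕ, 1 ≤ n → f n = 1 ∨ f n = -1)
    (c : ℝ) (hc : c ∈ Set.Ico (-1 : ℝ) 0)
    (hconv : ∃ L : ℝ, Filter.Tendsto
      (fun N : ℕ => ∑ p ∈ N.primesBelow, (c - (f p : ℝ)) / p) Filter.atTop (nhds L)) :
    ∀ C : ℝ, ∃ N : ℕ,
      C < |((∑ n ∈ Finset.Icc 1 N, ArithmeticFunction.moebius n * f n : ℤ) : ℝ)| := by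
  obtain ⟨L, hL⟩ := hconv
  have hprime (p : ℕ) (hp : p.Prime) : ‖(f p : ℝ)‖ ≤ 1 := by
    rcases hfpm p hp.one_le with h | h <;> simp [h]
  simpa using stmt_5_general (f := fun n ↦ (f n : ℝ)) (by simp [hf1])
    (fun m n _ ↦ by simp [hfmul]) hprime (tendsto_sum_primesBelow_div_atBot hc.2 hL)
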